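/- Let E be a real inner product space and let n be a positive integer. Let Φ : E → (Fin n → ℝ) be a map whose output always has all coordinates in [0,1]. Let f, g : (Fin n → ℝ) → ℝ both be entry-wise concave on the unit cube, with f(X) ≥ 0 for every binary vector X ∈ {0,1}ⁿ, and with g(X) = 0 or g(X) ≥ 1 for every binary vector X ∈ {0,1}ⁿ. Let β > 0 and define the loss ℓ : E → ℝ by ℓ(θ) = f(Φ(θ)) + β·g(Φ(θ)). Fix θ ∈ E, let L > 0 with 0 < α < 2/L, and suppose ℓ is differentiable with base-point L-Lipschitz gradient on the closed ball of radius α·‖∇ℓ(θ)‖ around θ. Let ε satisfy 0 ≤ ε < α·‖∇ℓ(θ)‖ and set Δ = ‖∇ℓ(θ)‖·ε + ε²/(2Lα² − 4α). If ℓ(θ) < β + Δ, then there exists a binary vector X ∈ {0,1}ⁿ with g(X) = 0 and f(X) ≤ ℓ(θ) − Δ. -/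

import Mathlib

/-- `F` is entry-wise concave on the unit cube: for every index `i` and every point `x`
with all coordinates in `[0,1]`, the map `t ↦ F (Function.update x i t)` is concave
on `[0,1]`. -/
def EntrywiseConcave (n : ℕ) (F : (Fin n → ℝ) → ℝ) : Prop :=
  ∀ (i : Fin n) (x : Fin n → ℝ), (∀ j, x j ∈ Set.Icc (0 : ℝ) 1) →
    ConcaveOn ℝ (Set.Icc (0 : ℝ) 1) (fun t => F (Function.update x i t))

theorem round_aux (n : ℕ) (F : (Fin n → ℝ) → ℝ) (hF : EntrywiseConcave n F)
    (x : Fin n → ℝ) (hx : ∀ j, x j ∈ Set.Icc (0 : ℝ) 1) (s : Finset (Fin n)) :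
    ∃ X : Fin n → ℝ, (∀ j, X j ∈ Set.Icc (0 : ℝ) 1) ∧ (∀ i ∈ s, X i = 0 ∨ X i = 1) ∧
      F X ≤ F x := by
  induction s using Finset.induction_on with
  | empty => exact ⟨x, hx, by simp, le_rfl⟩
  | insert a s ha ih =>
    obtain ⟨X, hX, hs, hle⟩ := ih
    have h0 : (0 : ℝ) ∈ Set.Icc (0 : ℝ) 1 := by simp
    have h1 : (1 : ℝ) ∈ Set.Icc (0 : ℝ) 1 := by simp
    have hmin := (hF a X hX).min_le_of_mem_Icc h0 h1 (hX a)
    simp only [Function.update_eq_self] at hmin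
    have key : ∀ c : ℝ, (c = 0 ∨ c = 1) → F (Function.update X a c) ≤ F X →
        ∃ X : Fin n → ℝ, (∀ j, X j ∈ Set.Icc (0 : ℝ) 1) ∧
          (∀ i ∈ insert a s, X i = 0 ∨ X i = 1) ∧ F X ≤ F x := by
      intro c hc hFc
      refine ⟨Function.update X a c, ?_, ?_, hFc.trans hle⟩
      · intro j
        by_cases hj : j = a
        · subst hj
          rcases hc with rfl | rfl <;> simp
        · simpa [Function.update_of_ne hj] using hX j
      · intro j hj'
        by_cases hj : j = a
        · subst hj
          simpa using hc
        · rw [Function.update_of_ne hj]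
          exact hs j (Finset.mem_of_mem_insert_of_ne hj' hj)
    rcases min_le_iff.1 hmin with h | h
    · exact key 0 (Or.inl rfl) h
    · exact key 1 (Or.inr rfl) h

theorem descent_aux {E : Type*} [NormedAddCommGroup E] [InnerProductSpace ℝ E] [CompleteSpace E]
    (ℓ : E → ℝ) (θ : E) (L α : ℝ) (hα : 0 < α)
    (hdiff : ∀ θ' : E, ‖θ' - θ‖ ≤ α * ‖gradient ℓ θ‖ → DifferentiableAt ℝ ℓ θ')
    (hlip : ∀ θ' : E, ‖θ' - θ‖ ≤ α * ‖gradient ℓ θ‖ →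
      ‖gradient ℓ θ' - gradient ℓ θ‖ ≤ L * ‖θ' - θ‖) :
    ℓ (θ - α • gradient ℓ θ) ≤
      ℓ θ - α * ‖gradient ℓ θ‖ ^ 2 + L * α ^ 2 * ‖gradient ℓ θ‖ ^ 2 / 2 := by
  set v := gradient ℓ θ with hv
  let p : ℝ → E := fun t => θ + t • (-(α • v))
  have hnorm : ∀ t ∈ Set.Icc (0 : ℝ) 1, ‖p t - θ‖ = t * (α * ‖v‖) := by
    intro t ht
    simp [p, norm_smul, abs_of_nonneg ht.1, abs_of_pos hα]
  have hball : ∀ t ∈ Set.Icc (0 : ℝ) 1, ‖p t - θ‖ ≤ α * ‖v‖ := by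
    intro t ht
    rw [hnorm t ht]
    exact mul_le_of_le_one_left (by positivity) ht.2
  have hp : ∀ t, HasDerivAt p (-(α • v)) t := by
    intro t
    have := ((hasDerivAt_id t).smul_const (-(α • v))).const_add θ
    rw [one_smul] at this
    exact this
  let φ : ℝ → ℝ := fun t => ℓ (p t) + (α * ‖v‖ ^ 2 * t - L * α ^ 2 * ‖v‖ ^ 2 / 2 * t ^ 2)
  have hφ : ∀ t ∈ Set.Icc (0 : ℝ) 1, HasDerivAt φ
      (inner ℝ (gradient ℓ (p t)) (-(α • v)) +
        (α * ‖v‖ ^ 2 - L * α ^ 2 * ‖v‖ ^ 2 * t)) t := by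
    intro t ht
    have h1 := (hdiff (p t) (hball t ht)).hasGradientAt.hasFDerivAt.comp_hasDerivAt t (hp t)
    have h2 : HasDerivAt (fun t : ℝ => α * ‖v‖ ^ 2 * t - L * α ^ 2 * ‖v‖ ^ 2 / 2 * t ^ 2)
        (α * ‖v‖ ^ 2 - L * α ^ 2 * ‖v‖ ^ 2 * t) t := by
      have := ((hasDerivAt_id t).const_mul (α * ‖v‖ ^ 2)).sub
        ((hasDerivAt_pow 2 t).const_mul (L * α ^ 2 * ‖v‖ ^ 2 / 2))
      refine this.congr_deriv ?_
      simp
      ring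
    exact h1.add h2
  have hanti : AntitoneOn φ (Set.Icc 0 1) := by
    refine antitoneOn_of_deriv_nonpos (convex_Icc 0 1)
      (fun t ht => (hφ t ht).continuousAt.continuousWithinAt)
      (fun t ht => (hφ t (interior_subset ht)).differentiableAt.differentiableWithinAt) ?_
    intro t ht
    replace ht := interior_subset ht
    rw [(hφ t ht).deriv]
    have hc := real_inner_le_norm (gradient ℓ (p t) - v) (-(α • v))
    have hl := hlip (p t) (hball t ht)
    rw [hnorm t ht] at hl
    rw [inner_sub_left, norm_neg, norm_smul, Real.norm_of_nonneg hα.le] at hc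
    have hvv : inner ℝ v (-(α • v)) = -(α * ‖v‖ ^ 2) := by
      rw [inner_neg_right, inner_smul_right, real_inner_self_eq_norm_sq]
    rw [hvv] at hc
    have := mul_le_mul_of_nonneg_right hl (by positivity : 0 ≤ α * ‖v‖)
    nlinarith
  have h := hanti (by simp : (0 : ℝ) ∈ Set.Icc (0 : ℝ) 1) (by simp : (1 : ℝ) ∈ Set.Icc (0 : ℝ) 1)
    zero_le_one
  simp only [φ, p, one_smul, zero_smul, add_zero, ← sub_eq_add_neg] at h
  linarith

theorem performance_guarantee_9
    {E : Type*} [NormedAddCommGroup E] [InnerProductSpace ℝ E] [CompleteSpace E]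
    (n : ℕ) (hn : 0 < n) (Φ : E → Fin n → ℝ)
    (hΦ : ∀ (θ : E) (i : Fin n), Φ θ i ∈ Set.Icc (0 : ℝ) 1)
    (f g : (Fin n → ℝ) → ℝ)
    (hf : EntrywiseConcave n f) (hg : EntrywiseConcave n g)
    (hf0 : ∀ X : Fin n → ℝ, (∀ i, X i = 0 ∨ X i = 1) → 0 ≤ f X)
    (hg01 : ∀ X : Fin n → ℝ, (∀ i, X i = 0 ∨ X i = 1) → g X = 0 ∨ 1 ≤ g X)
    (β : ℝ) (hβ : 0 < β)
    (ℓ : E → ℝ) (hℓ : ∀ θ, ℓ θ = f (Φ θ) + β * g (Φ θ))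
    (θ : E) (L α : ℝ) (hL : 0 < L) (hα : 0 < α) (hα2 : α < 2 / L)
    (hdiff : ∀ θ' : E, ‖θ' - θ‖ ≤ α * ‖gradient ℓ θ‖ → DifferentiableAt ℝ ℓ θ')
    (hlip : ∀ θ' : E, ‖θ' - θ‖ ≤ α * ‖gradient ℓ θ‖ →
      ‖gradient ℓ θ' - gradient ℓ θ‖ ≤ L * ‖θ' - θ‖)
    (ε : ℝ) (hε0 : 0 ≤ ε) (hε1 : ε < α * ‖gradient ℓ θ‖)
    (Δ : ℝ) (hΔ : Δ = ‖gradient ℓ θ‖ * ε + ε ^ 2 / (2 * L * α ^ 2 - 4 * α))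
    (hloss : ℓ θ < β + Δ) :
    ∃ X : Fin n → ℝ, (∀ i, X i = 0 ∨ X i = 1) ∧ g X = 0 ∧ f X ≤ ℓ θ - Δ := by
  have hd := descent_aux ℓ θ L α hα hdiff hlip
  have hLα : 0 < 2 - L * α := by
    have := (lt_div_iff₀ hL).1 hα2
    linarith
  have hle : ℓ (θ - α • gradient ℓ θ) ≤ ℓ θ - Δ := by
    set G := ‖gradient ℓ θ‖
    have hc : 0 < 2 * α * (2 - L * α) := by positivity
    have : Δ ≤ α * G ^ 2 - L * α ^ 2 * G ^ 2 / 2 := by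
      have e : 2 * L * α ^ 2 - 4 * α = -(2 * α * (2 - L * α)) := by ring
      have e2 : α * G ^ 2 - L * α ^ 2 * G ^ 2 / 2 - Δ =
          (ε - G * α * (2 - L * α)) ^ 2 / (2 * α * (2 - L * α)) := by
        rw [hΔ, e, div_neg]
        have hl : L = (2 - (2 - L * α)) / α := by field_simp; ring
        generalize 2 - L * α = d at hl hLα
        have hne : d ≠ 0 := hLα.ne'
        rw [hl]
        field_simp
        ring
      have : 0 ≤ (ε - G * α * (2 - L * α)) ^ 2 / (2 * α * (2 - L * α)) := by positivity
      linarith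
    linarith
  have hF : EntrywiseConcave n (fun x => f x + β * g x) := by
    intro i x hx
    exact (hf i x hx).add ((hg i x hx).smul hβ.le)
  obtain ⟨X, -, hX, hXle⟩ := round_aux n _ hF _ (hΦ (θ - α • gradient ℓ θ)) Finset.univ
  have hX' : ∀ i, X i = 0 ∨ X i = 1 := fun i => hX i (Finset.mem_univ i)
  simp only [← hℓ] at hXle
  have h0 := hf0 X hX'
  rcases hg01 X hX' with h | h
  · refine ⟨X, hX', h, ?_⟩
    rw [h] at hXle
    linarith
  · exfalso
    nlinarith
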